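/- Any two projection games G and H satisfy ‖G ⊗ H‖² ≤ φ(‖G‖²) · ‖H‖², where φ(x) = 2√x/(1+x) and ‖·‖ denotes the collision value. -/

import Mathlib

open Finset

/-- A projection game: finite nonempty question sets `Q1` (Alice) and `Q2` (Bob),
a finite nonempty alphabet `A`, and a probability mass function `μ` on triples
`(u, v, π)` where `π : A → Option A` encodes a projection constraint
(the answer pair `(α, β)` satisfies `π` iff `π β = some α`). -/
structure ProjGame where
  Q1 : Type
  Q2 : Type
  A : Type
  [fQ1 : Fintype Q1]
  [fQ2 : Fintype Q2]
  [fA : Fintype A]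
  [neQ1 : Nonempty Q1]
  [neQ2 : Nonempty Q2]
  [neA : Nonempty A]
  [dQ1 : DecidableEq Q1]
  [dQ2 : DecidableEq Q2]
  [dA : DecidableEq A]
  μ : Q1 × Q2 × (A → Option A) → ℝ
  μ_nonneg : ∀ x, 0 ≤ μ x
  μ_sum : ∑ x, μ x = 1

attribute [instance] ProjGame.fQ1 ProjGame.fQ2 ProjGame.fA
  ProjGame.neQ1 ProjGame.neQ2 ProjGame.neA ProjGame.dQ1 ProjGame.dQ2 ProjGame.dA

namespace ProjGame

variable (G : ProjGame)

/-- The `U`-marginal (Alice-side marginal) of `μ`. -/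
noncomputable def wU (u : G.Q1) : ℝ := ∑ v, ∑ π, G.μ (u, v, π)

/-- The `V`-marginal (Bob-side marginal) of `μ`. -/
noncomputable def wV (v : G.Q2) : ℝ := ∑ u, ∑ π, G.μ (u, v, π)

/-- The game operator: `(Gf)(u,α) = E_{(v,π)|u} [∑_{β : π β = some α} f (v,β)]`. -/
noncomputable def op (f : G.Q2 × G.A → ℝ) : G.Q1 × G.A → ℝ :=
  fun p =>
    (∑ v, ∑ π, G.μ (p.1, v, π) * ∑ β, if π β = some p.2 then f (v, β) else 0) / G.wU p.1

/-- Squared norm on functions on `U × Σ`: `‖g‖² = E_u [∑_α g(u,α)²]`. -/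
noncomputable def normUsq (g : G.Q1 × G.A → ℝ) : ℝ := ∑ u, G.wU u * ∑ α, (g (u, α)) ^ 2

/-- Squared norm on functions on `V × Σ`: `‖f‖² = E_v [∑_β f(v,β)²]`. -/
noncomputable def normVsq (f : G.Q2 × G.A → ℝ) : ℝ := ∑ v, G.wV v * ∑ β, (f (v, β)) ^ 2

/-- Inner product `⟨g, g'⟩ = E_u [∑_α g(u,α) g'(u,α)]`. -/
noncomputable def inn (g g' : G.Q1 × G.A → ℝ) : ℝ :=
  ∑ u, G.wU u * ∑ α, g (u, α) * g' (u, α)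

/-- An assignment for Bob. -/
def IsBob (f : G.Q2 × G.A → ℝ) : Prop := (∀ p, 0 ≤ f p) ∧ ∀ v, ∑ β, f (v, β) = 1

/-- An assignment for Alice. -/
def IsAlice (g : G.Q1 × G.A → ℝ) : Prop := (∀ p, 0 ≤ g p) ∧ ∀ u, ∑ α, g (u, α) = 1

/-- The value of the game: `val(G) = max ⟨g, Gf⟩` over assignments. -/
noncomputable def val : ℝ :=
  sSup { x | ∃ f g, G.IsBob f ∧ G.IsAlice g ∧ x = G.inn g (G.op f) }

/-- The collision value `‖G‖ = max_f ‖Gf‖` over assignments `f` for Bob. -/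
noncomputable def collVal : ℝ :=
  sSup { x | ∃ f, G.IsBob f ∧ x = Real.sqrt (G.normUsq (G.op f)) }

/-- Product of projection constraints. -/
def tensorC {A A' : Type} (π : A → Option A) (π' : A' → Option A') :
    A × A' → Option (A × A') :=
  fun b => (π b.1).bind fun a => (π' b.2).map fun a' => (a, a')

/-- The product (parallel repetition) of two projection games. -/
noncomputable def tensor (G H : ProjGame) : ProjGame where
  Q1 := G.Q1 × H.Q1
  Q2 := G.Q2 × H.Q2
  A := G.A × H.A
  μ := fun x =>
    ∑ y : (G.Q1 × G.Q2 × (G.A → Option G.A)) × (H.Q1 × H.Q2 × (H.A → Option H.A)),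
      if ((y.1.1, y.2.1), (y.1.2.1, y.2.2.1), tensorC y.1.2.2 y.2.2.2) = x
      then G.μ y.1 * H.μ y.2 else 0
  μ_nonneg := by
    intro x
    refine Finset.sum_nonneg fun y _ => ?_
    split
    · exact mul_nonneg (G.μ_nonneg _) (H.μ_nonneg _)
    · exact le_refl 0
  μ_sum := by
    rw [Finset.sum_comm]
    simp only [Finset.sum_ite_eq, Finset.mem_univ, if_true]
    rw [Fintype.sum_prod_type]
    calc (∑ y1, ∑ y2, G.μ y1 * H.μ y2)
        = (∑ y1, G.μ y1) * (∑ y2, H.μ y2) := by rw [Finset.sum_mul_sum]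
      _ = 1 := by rw [G.μ_sum, H.μ_sum, mul_one]

/-- `G.iterTensor k` is the `(k+1)`-fold parallel repetition `G^{⊗(k+1)}`. -/
noncomputable def iterTensor (G : ProjGame) : ℕ → ProjGame
  | 0 => G
  | n + 1 => G.tensor (G.iterTensor n)

/-- `val₊(G)`: supremum of values of vector assignments. -/
noncomputable def valPlus (G : ProjGame) : ℝ :=
  sSup { x | ∃ n : ℕ, 0 < n ∧ ∃ f : G.Q2 × G.A → Fin n → ℝ,
    (∀ p i, 0 ≤ f p i) ∧
    (∀ v, Real.sqrt (∑ i, (∑ β, f (v, β) i) ^ 2) ≤ 1) ∧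
    x = Real.sqrt (∑ u, G.wU u * ∑ α, ∑ i, (G.op (fun q => f q i) (u, α)) ^ 2) }

/-- `‖Th‖² = E_v [(∑_β h(v,β))²]`. -/
noncomputable def Tnormsq (G : ProjGame) (h : G.Q2 × G.A → ℝ) : ℝ :=
  ∑ v, G.wV v * (∑ β, h (v, β)) ^ 2

/-- `λ₊(G)`: supremum of `‖Gh‖/‖Th‖` over nonnegative `h` with `‖Th‖ > 0`. -/
noncomputable def lambdaPlus (G : ProjGame) : ℝ :=
  sSup { x | ∃ h : G.Q2 × G.A → ℝ, (∀ p, 0 ≤ h p) ∧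
    0 < Real.sqrt (G.Tnormsq h) ∧
    x = Real.sqrt (G.normUsq (G.op h)) / Real.sqrt (G.Tnormsq h) }

/-- The symmetrized distribution on `V × V` (with the constraints marginalized out). -/
noncomputable def msym (G : ProjGame) (v v' : G.Q2) : ℝ :=
  ∑ u, ((∑ π, G.μ (u, v, π)) * (∑ π', G.μ (u, v', π'))) / G.wU u

/-- `G` is `γ`-expanding: the Markov operator of the symmetrized constraint graph has
spectral gap at least `γ`, i.e. `|⟨x, Ax⟩| ≤ (1-γ) E_v[x(v)²]` for mean-zero `x`. -/
def IsExpanding (G : ProjGame) (γ : ℝ) : Prop :=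
  ∀ x : G.Q2 → ℝ, (∑ v, G.wV v * x v) = 0 →
    |∑ v, ∑ v', G.msym v v' * x v * x v'| ≤ (1 - γ) * ∑ v, G.wV v * (x v) ^ 2

/-- The symmetrized distribution on `(v, v', π, π')`. -/
noncomputable def msymFull (G : ProjGame) (v v' : G.Q2) (π π' : G.A → Option G.A) : ℝ :=
  ∑ u, (G.μ (u, v, π) * G.μ (u, v', π')) / G.wU u

/-- The value of the assignment `x` in the symmetrized game `G_sym`. -/
noncomputable def symValAssign (G : ProjGame) (x : G.Q2 → G.A) : ℝ :=
  ∑ v, ∑ v', ∑ π, ∑ π', G.msymFull v v' π π' *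
    (if ∃ α, π (x v) = some α ∧ π' (x v') = some α then 1 else 0)

/-- The value of the symmetrized game `G_sym`. -/
noncomputable def symVal (G : ProjGame) : ℝ :=
  sSup { r | ∃ x : G.Q2 → G.A, r = G.symValAssign x }

end ProjGame

/-!
The slices of an assignment for Bob in `G ⊗ H`, obtained by applying the operator of `H` to the
`H`-coordinates, form a vector assignment for `G`: it attaches to every question of Bob a vector of
nonnegative functions on the alphabet, and the squared norms of the vectors of total masses are at
most `‖H‖²`. So it suffices to bound the collision value of vector assignments.

Write the `i`-th coordinate of a vector assignment as `F i v * f i (v, β)`, where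
`∑ β, f i (v, β) ≤ 1`. Correlated sampling, with `i` and a level set of `F i ^ 2` drawn afresh until
the level set contains one of the questions `v`, `v'`, rounds it to an ordinary assignment, so the
average over `(v, v')` of the rounded collisions
`(∑ i, min (F i v ^ 2) (F i v' ^ 2) * z i) / ∑ i, max (F i v ^ 2) (F i v' ^ 2)` is at most `‖G‖²`,
where `z i` is the collision probability of `f i` at `(v, v')`. By Cauchy–Schwarz the collision
`∑ i, F i v * F i v' * z i` of the vector assignment is at most `φ` of the rounded one, times the
bound on the squared norms, and Jensen's inequality for the concave increasing function `φ` finishes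
the proof.
-/

section ScalarBound

/-- The function `φ` of the product bound. -/
noncomputable def phi (x : ℝ) : ℝ := 2 * √x / (1 + x)

theorem phi_nonneg {x : ℝ} (hx : 0 ≤ x) : 0 ≤ phi x := by
  unfold phi
  positivity

theorem concaveOn_two_mul_div_one_add_sq :
    ConcaveOn ℝ (Set.Icc 0 1) fun s : ℝ => 2 * s / (1 + s ^ 2) := by
  refine ⟨convex_Icc 0 1, fun s hs t ht a b ha hb hab => ?_⟩
  simp only [smul_eq_mul]
  obtain rfl : b = 1 - a := by linarith
  set z := a * s + (1 - a) * t with hz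
  have hz0 : 0 ≤ z := add_nonneg (mul_nonneg ha hs.1) (mul_nonneg hb ht.1)
  have hst : 0 ≤ 1 - s * t := sub_nonneg.2 (mul_le_one₀ hs.2 ht.1 ht.2)
  have hgap : 2 * z / (1 + z ^ 2) - (a * (2 * s / (1 + s ^ 2)) + (1 - a) * (2 * t / (1 + t ^ 2)))
      = 2 * (a * (1 - a) * (t - s) ^ 2 * (s + t + z * (1 - s * t))) /
        ((1 + z ^ 2) * (1 + s ^ 2) * (1 + t ^ 2)) := by
    rw [hz]
    field_simp
    ring
  have hnonneg : 0 ≤ a * (1 - a) * (t - s) ^ 2 * (s + t + z * (1 - s * t)) :=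
    mul_nonneg (mul_nonneg (mul_nonneg ha hb) (sq_nonneg _))
      (add_nonneg (add_nonneg hs.1 ht.1) (mul_nonneg hz0 hst))
  rw [← sub_nonneg, hgap]
  positivity

theorem monotoneOn_two_mul_div_one_add_sq :
    MonotoneOn (fun s : ℝ => 2 * s / (1 + s ^ 2)) (Set.Icc 0 1) := by
  intro s hs t ht hst
  have hprod : s * t ≤ 1 := mul_le_one₀ hs.2 ht.1 ht.2
  refine (div_le_div_iff₀ (by positivity) (by positivity)).2 ?_
  linear_combination 2 * mul_nonneg (sub_nonneg.2 hst) (sub_nonneg.2 hprod)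

theorem image_sqrt_Icc_zero_one : Real.sqrt '' Set.Icc 0 1 = Set.Icc 0 1 := by
  ext s
  constructor
  · rintro ⟨x, hx, rfl⟩
    exact ⟨Real.sqrt_nonneg x, Real.sqrt_le_one.2 hx.2⟩
  · exact fun hs => ⟨s ^ 2, ⟨sq_nonneg s, pow_le_one₀ hs.1 hs.2⟩, Real.sqrt_sq hs.1⟩

theorem phi_eqOn_comp_sqrt :
    Set.EqOn ((fun s : ℝ => 2 * s / (1 + s ^ 2)) ∘ Real.sqrt) phi (Set.Icc 0 1) := by
  intro x hx
  simp only [Function.comp_apply, phi, Real.sq_sqrt hx.1]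

theorem concaveOn_phi : ConcaveOn ℝ (Set.Icc 0 1) phi := by
  have hsqrt : ConcaveOn ℝ (Set.Icc 0 1) Real.sqrt :=
    Real.strictConcaveOn_sqrt.concaveOn.subset Set.Icc_subset_Ici_self (convex_Icc 0 1)
  refine ConcaveOn.congr (ConcaveOn.comp ?_ hsqrt ?_) phi_eqOn_comp_sqrt <;>
    rw [image_sqrt_Icc_zero_one]
  exacts [concaveOn_two_mul_div_one_add_sq, monotoneOn_two_mul_div_one_add_sq]

theorem monotoneOn_phi : MonotoneOn phi (Set.Icc 0 1) := by
  refine MonotoneOn.congr (MonotoneOn.comp monotoneOn_two_mul_div_one_add_sq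
    (Real.sqrt_monotone.monotoneOn _) ?_) phi_eqOn_comp_sqrt
  exact fun x hx => image_sqrt_Icc_zero_one ▸ Set.mem_image_of_mem _ hx

theorem sqrt_mul_le_mul_phi_div {m M K : ℝ} (hm : 0 ≤ m) (hM : 0 ≤ M) (hK : m + M ≤ 2 * K) :
    √(m * M) ≤ K * phi (m / M) := by
  obtain rfl | hM := hM.eq_or_lt
  · simp [phi]
  calc √(m * M) = M * √(m / M) := by
        rw [show m * M = M ^ 2 * (m / M) by field_simp, Real.sqrt_mul (sq_nonneg M),
          Real.sqrt_sq hM.le]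
    _ ≤ K * phi (m / M) := by
        rw [phi, ← mul_div_assoc, le_div_iff₀ (by positivity)]
        calc M * √(m / M) * (1 + m / M) = (m + M) * √(m / M) := by field_simp; ring
          _ ≤ 2 * K * √(m / M) := by gcongr
          _ = K * (2 * √(m / M)) := by ring

theorem sum_mul_mul_le_mul_phi {I : Type*} [Fintype I] {a b z : I → ℝ} {K : ℝ}
    (hz0 : ∀ i, 0 ≤ z i) (hz1 : ∀ i, z i ≤ 1)
    (ha : ∑ i, a i ^ 2 ≤ K) (hb : ∑ i, b i ^ 2 ≤ K) :
    ∑ i, a i * b i * z i ≤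
      K * phi ((∑ i, min (a i ^ 2) (b i ^ 2) * z i) / ∑ i, max (a i ^ 2) (b i ^ 2)) := by
  set m := ∑ i, min (a i ^ 2) (b i ^ 2) * z i
  set M := ∑ i, max (a i ^ 2) (b i ^ 2)
  have hmin (i : I) : 0 ≤ min (a i ^ 2) (b i ^ 2) := le_min (sq_nonneg _) (sq_nonneg _)
  have hmax (i : I) : 0 ≤ max (a i ^ 2) (b i ^ 2) := le_max_of_le_left (sq_nonneg _)
  have hm0 : 0 ≤ m := sum_nonneg fun i _ => mul_nonneg (hmin i) (hz0 i)
  have hM0 : 0 ≤ M := sum_nonneg fun i _ => hmax i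
  have hcauchy : (∑ i, a i * b i * z i) ^ 2 ≤ m * M :=
    calc (∑ i, a i * b i * z i) ^ 2
        ≤ m * ∑ i, max (a i ^ 2) (b i ^ 2) * z i := by
          refine sum_sq_le_sum_mul_sum_of_sq_le_mul _ (fun i _ => mul_nonneg (hmin i) (hz0 i))
            (fun i _ => mul_nonneg (hmax i) (hz0 i)) fun i _ => le_of_eq ?_
          linear_combination -z i ^ 2 * min_mul_max (a i ^ 2) (b i ^ 2)
      _ ≤ m * M := mul_le_mul_of_nonneg_left
          (sum_le_sum fun i _ => mul_le_of_le_one_right (hmax i) (hz1 i)) hm0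
  have hadd : m + M ≤ 2 * K :=
    calc m + M ≤ ∑ i, (min (a i ^ 2) (b i ^ 2) + max (a i ^ 2) (b i ^ 2)) := by
          rw [sum_add_distrib]
          exact add_le_add_left
            (sum_le_sum fun i _ => mul_le_of_le_one_right (hmin i) (hz1 i)) M
      _ = ∑ i, a i ^ 2 + ∑ i, b i ^ 2 := by simp only [min_add_max, sum_add_distrib]
      _ ≤ 2 * K := by linarith
  exact (Real.le_sqrt_of_sq_le hcauchy).trans (sqrt_mul_le_mul_phi_div hm0 hM0 hadd)

end ScalarBound

section LevelSets

variable {V R : Type*} [Fintype V] [DecidableEq V] [AddCommGroup R] [LinearOrder R]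

theorem exists_weights_sum_mem_and_eq_min [IsOrderedAddMonoid R] {a : V → R} (ha : ∀ v, 0 ≤ a v) :
    ∃ W : Finset V → R, (∀ S, 0 ≤ W S) ∧
      ∀ v v', ∑ S with v ∈ S ∧ v' ∈ S, W S = min (a v) (a v') := by
  suffices ∀ (s : Finset V) (a : V → R), (∀ v, 0 ≤ a v) → (∀ v ∉ s, a v = 0) →
      ∃ W : Finset V → R, (∀ S, 0 ≤ W S) ∧
        ∀ v v', ∑ S with v ∈ S ∧ v' ∈ S, W S = min (a v) (a v') from
    this univ a ha (by simp)
  intro s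
  induction s using Finset.strongInduction with
  | H s ih =>
    intro a ha hsupp
    obtain rfl | hne := s.eq_empty_or_nonempty
    · exact ⟨0, fun _ => le_rfl, fun v v' => by simp [hsupp]⟩
    -- Peel off the lowest level: the minimum of `a` over its support, as the weight of the support.
    obtain ⟨x, hx, hmin⟩ := s.exists_min_image a hne
    let peeled : V → R := fun v => if v ∈ s then a v - a x else 0
    obtain ⟨W, hW, hWmin⟩ := ih (s.erase x) (erase_ssubset hx) peeled
      (fun v => by
        dsimp only [peeled]
        split_ifs with hv
        exacts [sub_nonneg.2 (hmin v hv), le_rfl])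
      (fun v hv => by
        obtain rfl | hvx := eq_or_ne v x
        · exact (if_pos hx).trans (sub_self _)
        · exact if_neg fun hvs => hv (mem_erase.2 ⟨hvx, hvs⟩))
    refine ⟨fun S => W S + if S = s then a x else 0, fun S => ?_, fun v v' => ?_⟩
    · exact add_nonneg (hW S) (by split_ifs; exacts [ha x, le_rfl])
    · rw [sum_add_distrib, hWmin, sum_ite_eq']
      by_cases hv : v ∈ s <;> by_cases hv' : v' ∈ s <;>
        simp [peeled, hv, hv', hsupp, ha, hmin, min_sub_sub_right]

theorem sum_mem_or_eq_max {a : V → R} {W : Finset V → R}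
    (hW : ∀ v v', ∑ S with v ∈ S ∧ v' ∈ S, W S = min (a v) (a v')) (v v' : V) :
    ∑ S with v ∈ S ∨ v' ∈ S, W S = max (a v) (a v') := by
  have hdiag (v : V) : ∑ S with v ∈ S, W S = a v := by
    simpa only [and_self, min_self] using hW v v
  have hunion := sum_union_inter (s₁ := univ.filter (v ∈ ·)) (s₂ := univ.filter (v' ∈ ·)) (f := W)
  rw [← filter_or, ← filter_and, hW, hdiag, hdiag, ← max_add_min (a v)] at hunion
  exact add_right_cancel hunion

end LevelSets

section CorrelatedSampling

variable {V B : Type*}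

/-- The kernel `f ⊗ f` on pairs of points. -/
def selfTensor {X : Type*} (f : X → ℝ) : X × X → ℝ := fun x => f x.1 * f x.2

section Rounds

variable [DecidableEq V] {Ω : Type*} [Fintype Ω]

/-- The weight of the outcomes whose set meets a pair of questions. -/
def hitWeight (P : Ω → ℝ) (S : Ω → Finset V) (v v' : V) : ℝ :=
  ∑ o with v ∈ S o ∨ v' ∈ S o, P o

/-- The kernel of one round of correlated sampling: an outcome `o` drawn with weight `P o` lets
`f o` answer both questions if they lie in `S o`. -/
def roundKernel (P : Ω → ℝ) (S : Ω → Finset V) (f : Ω → V × B → ℝ) (x : (V × B) × (V × B)) : ℝ :=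
  ∑ o with x.1.1 ∈ S o ∧ x.2.1 ∈ S o, P o * selfTensor (f o) x

variable {P : Ω → ℝ} {S : Ω → Finset V}

theorem hitWeight_nonneg (hP : ∀ o, 0 ≤ P o) (v v' : V) : 0 ≤ hitWeight P S v v' :=
  sum_nonneg fun o _ => hP o

theorem roundKernel_eq_zero {f : Ω → V × B → ℝ} (hP : ∀ o, 0 ≤ P o) {x : (V × B) × (V × B)}
    (hx : hitWeight P S x.1.1 x.2.1 = 0) : roundKernel P S f x = 0 := by
  refine sum_eq_zero fun o ho => ?_
  have hmem : o ∈ univ.filter fun o => x.1.1 ∈ S o ∨ x.2.1 ∈ S o :=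
    mem_filter.2 ⟨mem_univ o, .inl (mem_filter.1 ho).2.1⟩
  rw [(sum_eq_zero_iff_of_nonneg fun o _ => hP o).1 hx o hmem, zero_mul]

end Rounds

/-- A sub-probability distribution on answers `B` for every question in `V`: the notion of an
assignment for Bob in which total mass below `1` is allowed. -/
structure IsSubassignment [Fintype B] (f : V × B → ℝ) : Prop where
  nonneg : ∀ p, 0 ≤ f p
  sum_le_one : ∀ v, ∑ β, f (v, β) ≤ 1

variable [Fintype B]

theorem IsSubassignment.zero : IsSubassignment (0 : V × B → ℝ) :=
  ⟨fun _ => le_rfl, fun _ => by simp⟩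

theorem IsSubassignment.piecewise {f g : V × B → ℝ} (hf : IsSubassignment f)
    (hg : IsSubassignment g) (S : Finset V) [DecidableEq V] :
    IsSubassignment fun p => if p.1 ∈ S then f p else g p where
  nonneg p := by split_ifs; exacts [hf.nonneg p, hg.nonneg p]
  sum_le_one v := by
    dsimp only
    split_ifs
    exacts [hf.sum_le_one v, hg.sum_le_one v]

theorem exists_isSubassignment_eq_sum_mul {h : V × B → ℝ} (hh : ∀ p, 0 ≤ h p) :
    ∃ f, IsSubassignment f ∧ ∀ p, h p = (∑ β, h (p.1, β)) * f p := by
  have hsum (v : V) : 0 ≤ ∑ β, h (v, β) := sum_nonneg fun β _ => hh _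
  refine ⟨fun p => h p / ∑ β, h (p.1, β), ⟨fun p => div_nonneg (hh p) (hsum _), fun v => ?_⟩,
    fun p => (mul_div_cancel_of_imp' fun h0 => ?_).symm⟩
  · dsimp only
    rw [← sum_div]
    exact div_self_le_one _
  · exact (sum_eq_zero_iff_of_nonneg fun β _ => hh _).1 h0 p.2 (mem_univ _)

variable [Fintype V]

/-- The kernels dominated by averages of `f ⊗ f` over random subassignments `f`. This is encoded
dually: no nonnegative linear functional separates the kernel from the tensor squares. -/
def IsRoundable (k : (V × B) × (V × B) → ℝ) : Prop :=
  ∀ (C : (V × B) × (V × B) → ℝ) (s : ℝ), 0 ≤ C →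
    (∀ f, IsSubassignment f → C ⬝ᵥ selfTensor f ≤ s) → C ⬝ᵥ k ≤ s

theorem IsRoundable.zero : IsRoundable (0 : (V × B) × (V × B) → ℝ) := by
  intro C s _ hs
  convert hs 0 .zero
  ext x
  simp [selfTensor]

theorem IsRoundable.sum {Ω : Type*} [Fintype Ω] {P : Ω → ℝ} (hP : ∀ o, 0 ≤ P o)
    (hP1 : ∑ o, P o = 1) {k : Ω → (V × B) × (V × B) → ℝ} (hk : ∀ o, IsRoundable (k o)) :
    IsRoundable (∑ o, P o • k o) := by
  intro C s hC hs
  calc C ⬝ᵥ ∑ o, P o • k o = ∑ o, P o * (C ⬝ᵥ k o) := by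
        simp only [dotProduct_sum, dotProduct_smul, smul_eq_mul]
    _ ≤ ∑ o, P o * s := sum_le_sum fun o _ => mul_le_mul_of_nonneg_left (hk o C s hC hs) (hP o)
    _ = s := by rw [← sum_mul, hP1, one_mul]

theorem IsRoundable.of_tendsto {k : ℕ → (V × B) × (V × B) → ℝ} {l : (V × B) × (V × B) → ℝ}
    (hk : ∀ n, IsRoundable (k n)) (hl : Filter.Tendsto k Filter.atTop (nhds l)) :
    IsRoundable l := fun C s hC hs =>
  le_of_tendsto' (((continuous_const.dotProduct continuous_id).tendsto l).comp hl)
    fun n => hk n C s hC hs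

theorem IsRoundable.patch [DecidableEq V] {k : (V × B) × (V × B) → ℝ} (hk : IsRoundable k)
    {f : V × B → ℝ} (hf : IsSubassignment f) (S : Finset V) :
    IsRoundable fun x => if x.1.1 ∈ S ∧ x.2.1 ∈ S then selfTensor f x
      else if x.1.1 ∈ S ∨ x.2.1 ∈ S then 0 else k x := by
  intro C s hC hs
  let inner : (V × B) × (V × B) → ℝ := fun x =>
    if x.1.1 ∈ S ∧ x.2.1 ∈ S then selfTensor f x else 0
  let outer : (V × B) × (V × B) → ℝ := fun x => if x.1.1 ∈ S ∨ x.2.1 ∈ S then 0 else C x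
  have houter : 0 ≤ outer := fun x => by
    dsimp only [outer, Pi.zero_apply]
    split_ifs
    exacts [le_rfl, hC x]
  have hpatched (g : V × B → ℝ) (hg : IsSubassignment g) :
      outer ⬝ᵥ selfTensor g ≤ s - C ⬝ᵥ inner := by
    refine le_sub_iff_add_le.2 (le_trans ?_ (hs _ (hf.piecewise hg S)))
    simp only [dotProduct, ← sum_add_distrib]
    refine sum_le_sum fun x _ => ?_
    have hCx := hC x
    by_cases h1 : x.1.1 ∈ S <;> by_cases h2 : x.2.1 ∈ S <;>
      simp only [outer, inner, selfTensor, h1, h2, and_self, or_self, and_false, or_true, true_or,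
        and_true, if_true, if_false, zero_mul, mul_zero, zero_add, add_zero, le_refl]
    · exact mul_nonneg hCx (mul_nonneg (hf.nonneg _) (hg.nonneg _))
    · exact mul_nonneg hCx (mul_nonneg (hg.nonneg _) (hf.nonneg _))
  refine le_of_eq_of_le ?_ (le_sub_iff_add_le.1 (hk outer _ houter hpatched))
  simp only [dotProduct, ← sum_add_distrib]
  refine sum_congr rfl fun x _ => ?_
  by_cases h1 : x.1.1 ∈ S <;> by_cases h2 : x.2.1 ∈ S <;> simp [outer, inner, h1, h2]

section Rounds

variable [DecidableEq V] {Ω : Type*} [Fintype Ω] {P : Ω → ℝ} {S : Ω → Finset V} {f : Ω → V × B → ℝ}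

theorem IsRoundable.roundKernel_add {k : (V × B) × (V × B) → ℝ} (hk : IsRoundable k)
    (hP : ∀ o, 0 ≤ P o) (hP1 : ∑ o, P o = 1) (hf : ∀ o, IsSubassignment (f o)) :
    IsRoundable fun x => roundKernel P S f x + (1 - hitWeight P S x.1.1 x.2.1) * k x := by
  convert IsRoundable.sum hP hP1 fun o => hk.patch (hf o) (S o) using 1
  ext x
  rw [← hP1, hitWeight, roundKernel,
    ← sum_filter_add_sum_filter_not univ (fun o => x.1.1 ∈ S o ∨ x.2.1 ∈ S o) P,
    add_sub_cancel_left, sum_filter, sum_filter, sum_mul, ← sum_add_distrib, Finset.sum_apply]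
  refine sum_congr rfl fun o _ => ?_
  by_cases h1 : x.1.1 ∈ S o <;> by_cases h2 : x.2.1 ∈ S o <;> simp [h1, h2]

theorem isRoundable_roundKernel_div_of_sum_eq_one (hP : ∀ o, 0 ≤ P o) (hP1 : ∑ o, P o = 1)
    (hf : ∀ o, IsSubassignment (f o)) :
    IsRoundable fun x => roundKernel P S f x / hitWeight P S x.1.1 x.2.1 := by
  set k : (V × B) × (V × B) → ℝ := fun x => roundKernel P S f x / hitWeight P S x.1.1 x.2.1
  have hk (x) : hitWeight P S x.1.1 x.2.1 * k x = roundKernel P S f x :=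
    mul_div_cancel_of_imp' (roundKernel_eq_zero hP)
  -- The kernel of the protocol that gives up after `n` rounds.
  have htruncated (n : ℕ) :
      IsRoundable fun x => (1 - (1 - hitWeight P S x.1.1 x.2.1) ^ n) * k x := by
    induction n with
    | zero =>
      convert IsRoundable.zero (V := V) (B := B) using 2
      simp
    | succ n ih =>
      convert ih.roundKernel_add hP hP1 hf (S := S) using 2 with x
      rw [← hk]
      ring
  refine .of_tendsto htruncated (tendsto_pi_nhds.2 fun x => ?_)
  obtain hx | hx := (hitWeight_nonneg hP x.1.1 x.2.1 (S := S)).eq_or_lt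
  · have : k x = 0 := div_eq_zero_iff.2 (.inr hx.symm)
    simp [this]
  · have hle : hitWeight P S x.1.1 x.2.1 ≤ 1 :=
      (sum_le_univ_sum_of_nonneg hP).trans_eq hP1
    have hpow := tendsto_pow_atTop_nhds_zero_of_lt_one (sub_nonneg.2 hle) (sub_lt_self 1 hx)
    simpa using (hpow.const_sub 1).mul_const (k x)

theorem isRoundable_roundKernel_div (hP : ∀ o, 0 ≤ P o) (hf : ∀ o, IsSubassignment (f o)) :
    IsRoundable fun x => roundKernel P S f x / hitWeight P S x.1.1 x.2.1 := by
  set T := ∑ o, P o with hT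
  obtain hT0 | hT0 := eq_or_ne T 0
  · have hP0 (o) : P o = 0 := (sum_eq_zero_iff_of_nonneg fun o _ => hP o).1 hT0 o (mem_univ o)
    convert IsRoundable.zero (V := V) (B := B) using 2
    simp [roundKernel, hP0]
  · convert isRoundable_roundKernel_div_of_sum_eq_one (P := fun o => P o / T) (S := S)
      (fun o => div_nonneg (hP o) (sum_nonneg fun o _ => hP o)) ?_ hf using 2 with x
    · simp only [roundKernel, hitWeight, div_mul_eq_mul_div, ← sum_div]
      rw [div_div_div_cancel_right₀ hT0]
    · rw [← sum_div, ← hT, div_self hT0]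

end Rounds

theorem isRoundable_min_div_max {I : Type*} [Fintype I] {a : I → V → ℝ} (ha : ∀ i v, 0 ≤ a i v)
    {f : I → V × B → ℝ} (hf : ∀ i, IsSubassignment (f i)) :
    IsRoundable fun x => (∑ i, min (a i x.1.1) (a i x.2.1) * selfTensor (f i) x) /
      ∑ i, max (a i x.1.1) (a i x.2.1) := by
  classical
  choose W hW hWmin using fun i => exists_weights_sum_mem_and_eq_min (ha i)
  convert isRoundable_roundKernel_div (P := fun o : I × Finset V => W o.1 o.2)
    (S := Prod.snd) (f := fun o => f o.1) (fun o => hW o.1 o.2) (fun o => hf o.1) using 3 with x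
  · simp only [roundKernel, sum_filter, Fintype.sum_prod_type]
    simp only [← sum_filter, ← sum_mul, hWmin]
  · simp only [hitWeight, sum_filter, Fintype.sum_prod_type]
    simp only [← sum_filter, sum_mem_or_eq_max (hWmin _)]

end CorrelatedSampling

namespace ProjGame

section Operator

variable (G : ProjGame)

theorem wU_nonneg (u : G.Q1) : 0 ≤ G.wU u :=
  sum_nonneg fun _ _ => sum_nonneg fun _ _ => G.μ_nonneg _

theorem sum_wU : ∑ u, G.wU u = 1 := by
  simp only [wU, ← G.μ_sum, Fintype.sum_prod_type]

/-- The matrix of the game operator; as in `ProjGame.op`, the rows of questions of probability `0`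
vanish because `x / 0 = 0`. -/
noncomputable def opMatrix : Matrix (G.Q1 × G.A) (G.Q2 × G.A) ℝ := fun i p =>
  (∑ π with π p.2 = some i.2, G.μ (i.1, p.1, π)) / G.wU i.1

theorem op_eq_mulVec (f : G.Q2 × G.A → ℝ) : G.op f = G.opMatrix.mulVec f := by
  ext ⟨u, α⟩
  simp only [op, opMatrix, Matrix.mulVec, dotProduct, Fintype.sum_prod_type, sum_filter, sum_div,
    sum_mul, mul_sum]
  refine sum_congr rfl fun v _ => sum_comm.trans ?_
  refine sum_congr rfl fun β _ => sum_congr rfl fun π _ => ?_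
  split_ifs <;> ring

theorem opMatrix_nonneg (i : G.Q1 × G.A) (p : G.Q2 × G.A) : 0 ≤ G.opMatrix i p :=
  div_nonneg (sum_nonneg fun _ _ => G.μ_nonneg _) (G.wU_nonneg _)

theorem op_nonneg {f : G.Q2 × G.A → ℝ} (hf : ∀ p, 0 ≤ f p) (i : G.Q1 × G.A) : 0 ≤ G.op f i := by
  rw [op_eq_mulVec]
  exact dotProduct_nonneg_of_nonneg (fun p => G.opMatrix_nonneg i p) hf

theorem normUsq_eq_sum_prod (g : G.Q1 × G.A → ℝ) :
    G.normUsq g = ∑ i, G.wU i.1 * g i ^ 2 := by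
  simp only [normUsq, Fintype.sum_prod_type, mul_sum]

theorem sum_opMatrix_le (u : G.Q1) (p : G.Q2 × G.A) :
    ∑ α, G.opMatrix (u, α) p ≤ (∑ π, G.μ (u, p.1, π)) / G.wU u := by
  simp only [opMatrix, ← sum_div, sum_filter]
  rw [sum_comm]
  gcongr with π
  · exact G.wU_nonneg u
  · cases π p.2 <;> simp [G.μ_nonneg]

/-- The kernel of the quadratic form `f ↦ ‖Gf‖²`: the probability that two independent copies of
Bob's side of the game, sharing Alice's question, have the two given questions and project the two
given answers to the same answer of Alice. -/
noncomputable def collisionKernel (x : (G.Q2 × G.A) × (G.Q2 × G.A)) : ℝ :=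
  ∑ i, G.wU i.1 * (G.opMatrix i x.1 * G.opMatrix i x.2)

theorem collisionKernel_nonneg : 0 ≤ G.collisionKernel := fun _ =>
  sum_nonneg fun _ _ => mul_nonneg (G.wU_nonneg _)
    (mul_nonneg (G.opMatrix_nonneg _ _) (G.opMatrix_nonneg _ _))

theorem normUsq_op_eq_dotProduct (f : G.Q2 × G.A → ℝ) :
    G.normUsq (G.op f) = G.collisionKernel ⬝ᵥ selfTensor f := by
  simp only [normUsq_eq_sum_prod, op_eq_mulVec, Matrix.mulVec, dotProduct, collisionKernel,
    selfTensor, Fintype.sum_prod_type (α₁ := G.Q2 × G.A), sq, mul_sum, sum_mul]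
  rw [sum_comm]
  refine sum_congr rfl fun p _ => sum_comm.trans ?_
  refine sum_congr rfl fun q _ => sum_congr rfl fun i _ => ?_
  ring

theorem collisionKernel_le_msym (x : (G.Q2 × G.A) × (G.Q2 × G.A)) :
    G.collisionKernel x ≤ G.msym x.1.1 x.2.1 := by
  simp only [collisionKernel, msym, Fintype.sum_prod_type, ← mul_sum]
  refine sum_le_sum fun u _ => ?_
  have hα (α : G.A) : G.opMatrix (u, α) x.2 ≤ (∑ π, G.μ (u, x.2.1, π)) / G.wU u :=
    (single_le_sum (fun α _ => G.opMatrix_nonneg (u, α) x.2) (mem_univ α)).trans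
      (G.sum_opMatrix_le u x.2)
  have hw := G.wU_nonneg u
  have hμ : 0 ≤ (∑ π, G.μ (u, x.2.1, π)) / G.wU u :=
    div_nonneg (sum_nonneg fun _ _ => G.μ_nonneg _) hw
  calc G.wU u * ∑ α, G.opMatrix (u, α) x.1 * G.opMatrix (u, α) x.2
      ≤ G.wU u * ∑ α, G.opMatrix (u, α) x.1 * ((∑ π, G.μ (u, x.2.1, π)) / G.wU u) := by
        gcongr with α
        exacts [G.opMatrix_nonneg _ _, hα α]
    _ ≤ G.wU u * ((∑ π, G.μ (u, x.1.1, π)) / G.wU u * ((∑ π, G.μ (u, x.2.1, π)) / G.wU u)) := by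
        rw [← sum_mul]
        gcongr
        exact G.sum_opMatrix_le u x.1
    _ = (∑ π, G.μ (u, x.1.1, π)) * (∑ π, G.μ (u, x.2.1, π)) / G.wU u := by
        obtain hu | hu := eq_or_ne (G.wU u) 0
        · simp [hu]
        · field_simp

theorem msym_nonneg (v v' : G.Q2) : 0 ≤ G.msym v v' :=
  sum_nonneg fun u _ => div_nonneg (mul_nonneg (sum_nonneg fun _ _ => G.μ_nonneg _)
    (sum_nonneg fun _ _ => G.μ_nonneg _)) (G.wU_nonneg u)

theorem sum_msym : ∑ x : G.Q2 × G.Q2, G.msym x.1 x.2 = 1 := by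
  simp only [msym]
  rw [sum_comm, ← G.sum_wU]
  refine sum_congr rfl fun u _ => ?_
  simp only [← sum_div, Fintype.sum_prod_type, ← sum_mul_sum]
  exact mul_self_div_self (G.wU u)

/-- The contribution of a pair of Bob's questions to `‖Gf‖²`. -/
noncomputable def pairCollision (f : G.Q2 × G.A → ℝ) (v v' : G.Q2) : ℝ :=
  ∑ β, ∑ β', G.collisionKernel ((v, β), (v', β')) * (f (v, β) * f (v', β'))

variable {G}

theorem dotProduct_collisionKernel (k : (G.Q2 × G.A) × (G.Q2 × G.A) → ℝ) :
    G.collisionKernel ⬝ᵥ k = ∑ x : G.Q2 × G.Q2, ∑ β, ∑ β',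
      G.collisionKernel ((x.1, β), (x.2, β')) * k ((x.1, β), (x.2, β')) := by
  simp only [dotProduct, Fintype.sum_prod_type]
  exact sum_congr rfl fun v _ => sum_comm

theorem normUsq_op_eq_sum_pairCollision (f : G.Q2 × G.A → ℝ) :
    G.normUsq (G.op f) = ∑ x : G.Q2 × G.Q2, G.pairCollision f x.1 x.2 := by
  rw [normUsq_op_eq_dotProduct, dotProduct_collisionKernel]
  rfl

theorem pairCollision_mul (F : G.Q2 → ℝ) (f : G.Q2 × G.A → ℝ) (v v' : G.Q2) :
    G.pairCollision (fun p => F p.1 * f p) v v' = F v * F v' * G.pairCollision f v v' := by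
  simp only [pairCollision, mul_sum]
  refine sum_congr rfl fun β _ => sum_congr rfl fun β' _ => ?_
  ring

theorem pairCollision_nonneg {f : G.Q2 × G.A → ℝ} (hf : ∀ p, 0 ≤ f p) (v v' : G.Q2) :
    0 ≤ G.pairCollision f v v' :=
  sum_nonneg fun _ _ => sum_nonneg fun _ _ =>
    mul_nonneg (G.collisionKernel_nonneg _) (mul_nonneg (hf _) (hf _))

theorem pairCollision_le_msym {f : G.Q2 × G.A → ℝ} (hf : IsSubassignment f) (v v' : G.Q2) :
    G.pairCollision f v v' ≤ G.msym v v' :=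
  calc G.pairCollision f v v' ≤ ∑ β, ∑ β', G.msym v v' * (f (v, β) * f (v', β')) := by
        refine sum_le_sum fun β _ => sum_le_sum fun β' _ => ?_
        exact mul_le_mul_of_nonneg_right (G.collisionKernel_le_msym _)
          (mul_nonneg (hf.nonneg _) (hf.nonneg _))
    _ = G.msym v v' * ((∑ β, f (v, β)) * ∑ β', f (v', β')) := by
        simp only [sum_mul_sum]
        simp only [mul_sum]
    _ ≤ G.msym v v' := mul_le_of_le_one_right (G.msym_nonneg v v')
        (mul_le_one₀ (hf.sum_le_one v) (sum_nonneg fun _ _ => hf.nonneg _) (hf.sum_le_one v'))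

theorem normUsq_op_le_one {f : G.Q2 × G.A → ℝ} (hf : IsSubassignment f) :
    G.normUsq (G.op f) ≤ 1 := by
  rw [normUsq_op_eq_sum_pairCollision, ← G.sum_msym]
  exact sum_le_sum fun x _ => pairCollision_le_msym hf x.1 x.2

end Operator

section CollisionValue

variable {G : ProjGame}

theorem IsBob.isSubassignment {f : G.Q2 × G.A → ℝ} (hf : G.IsBob f) : IsSubassignment f :=
  ⟨hf.1, fun v => (hf.2 v).le⟩

theorem _root_.IsSubassignment.exists_isBob_le {f : G.Q2 × G.A → ℝ} (hf : IsSubassignment f) :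
    ∃ g, G.IsBob g ∧ ∀ p, f p ≤ g p := by
  obtain ⟨b⟩ := G.neA
  have hle (p : G.Q2 × G.A) : f p ≤ f p + if p.2 = b then 1 - ∑ β, f (p.1, β) else 0 := by
    have := hf.sum_le_one p.1
    split_ifs <;> linarith
  exact ⟨_, ⟨fun p => (hf.nonneg p).trans (hle p), fun v => by simp [sum_add_distrib]⟩, hle⟩

theorem normUsq_op_mono {f g : G.Q2 × G.A → ℝ} (hf : ∀ p, 0 ≤ f p) (hfg : ∀ p, f p ≤ g p) :
    G.normUsq (G.op f) ≤ G.normUsq (G.op g) := by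
  simp only [normUsq_op_eq_dotProduct]
  exact dotProduct_le_dotProduct_of_nonneg_left
    (fun x => mul_le_mul (hfg _) (hfg _) (hf _) ((hf _).trans (hfg _))) G.collisionKernel_nonneg

variable (G) in
theorem collVal_nonneg : 0 ≤ G.collVal :=
  Real.sSup_nonneg <| by
    rintro _ ⟨f, _, rfl⟩
    exact Real.sqrt_nonneg _

theorem collVal_sq_le {K : ℝ} (hK : 0 ≤ K) (h : ∀ f, G.IsBob f → G.normUsq (G.op f) ≤ K) :
    G.collVal ^ 2 ≤ K := by
  refine (Real.le_sqrt G.collVal_nonneg hK).1 (Real.sSup_le ?_ (Real.sqrt_nonneg K))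
  rintro _ ⟨f, hf, rfl⟩
  exact Real.sqrt_le_sqrt (h f hf)

variable (G) in
theorem collVal_sq_le_one : G.collVal ^ 2 ≤ 1 :=
  collVal_sq_le zero_le_one fun _ hf => normUsq_op_le_one hf.isSubassignment

theorem IsBob.normUsq_op_le {f : G.Q2 × G.A → ℝ} (hf : G.IsBob f) :
    G.normUsq (G.op f) ≤ G.collVal ^ 2 := by
  refine (Real.sqrt_le_left G.collVal_nonneg).1 (le_csSup ⟨1, ?_⟩ ⟨f, hf, rfl⟩)
  rintro _ ⟨g, hg, rfl⟩
  exact Real.sqrt_le_one.2 (normUsq_op_le_one hg.isSubassignment)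

theorem normUsq_op_le_collVal_sq {f : G.Q2 × G.A → ℝ} (hf : IsSubassignment f) :
    G.normUsq (G.op f) ≤ G.collVal ^ 2 := by
  obtain ⟨g, hg, hfg⟩ := hf.exists_isBob_le
  exact (normUsq_op_mono hf.nonneg hfg).trans hg.normUsq_op_le

theorem _root_.IsRoundable.collisionKernel_dotProduct_le
    {k : (G.Q2 × G.A) × (G.Q2 × G.A) → ℝ} (hk : IsRoundable k) :
    G.collisionKernel ⬝ᵥ k ≤ G.collVal ^ 2 :=
  hk _ _ G.collisionKernel_nonneg fun f hf =>
    (G.normUsq_op_eq_dotProduct f).symm.trans_le (normUsq_op_le_collVal_sq hf)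

end CollisionValue

section VectorAssignments

variable {G : ProjGame} {I : Type*} [Fintype I] {F : I → G.Q2 → ℝ} {f : I → G.Q2 × G.A → ℝ} {K : ℝ}

/-- The probability that two copies of Bob asked `v` and `v'` collide, relative to `G.msym v v'`,
when the vector assignment with norms `F` and directions `f` is rounded by correlated sampling. -/
noncomputable def roundedCollision (F : I → G.Q2 → ℝ) (f : I → G.Q2 × G.A → ℝ) (v v' : G.Q2) : ℝ :=
  (∑ i, min (F i v ^ 2) (F i v' ^ 2) * (G.pairCollision (f i) v v' / G.msym v v')) /
    ∑ i, max (F i v ^ 2) (F i v' ^ 2)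

theorem roundedCollision_mem_Icc (hf : ∀ i, IsSubassignment (f i)) (v v' : G.Q2) :
    roundedCollision F f v v' ∈ Set.Icc 0 1 := by
  have hmin (i : I) : 0 ≤ min (F i v ^ 2) (F i v' ^ 2) := le_min (sq_nonneg _) (sq_nonneg _)
  have hmax : 0 ≤ ∑ i, max (F i v ^ 2) (F i v' ^ 2) :=
    sum_nonneg fun i _ => le_max_of_le_left (sq_nonneg _)
  constructor
  · exact div_nonneg (sum_nonneg fun i _ => mul_nonneg (hmin i)
      (div_nonneg (pairCollision_nonneg (hf i).nonneg v v') (G.msym_nonneg v v'))) hmax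
  · refine div_le_one_of_le₀ (sum_le_sum fun i _ => ?_) hmax
    exact (mul_le_of_le_one_right (hmin i) (div_le_one_of_le₀ (pairCollision_le_msym (hf i) v v')
      (G.msym_nonneg v v'))).trans min_le_max

theorem msym_mul_pairCollision_div_msym {f : G.Q2 × G.A → ℝ} (hf : IsSubassignment f)
    (v v' : G.Q2) : G.msym v v' * (G.pairCollision f v v' / G.msym v v') = G.pairCollision f v v' :=
  mul_div_cancel_of_imp' fun h =>
    le_antisymm (h ▸ pairCollision_le_msym hf v v') (pairCollision_nonneg hf.nonneg v v')

theorem sum_msym_mul_roundedCollision_le (hf : ∀ i, IsSubassignment (f i)) :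
    ∑ x : G.Q2 × G.Q2, G.msym x.1 x.2 * roundedCollision F f x.1 x.2 ≤ G.collVal ^ 2 := by
  refine le_of_eq_of_le ?_ (isRoundable_min_div_max (a := fun i v => F i v ^ 2)
    (fun _ _ => sq_nonneg _) hf).collisionKernel_dotProduct_le
  rw [dotProduct_collisionKernel]
  refine sum_congr rfl fun x _ => ?_
  rw [roundedCollision, ← mul_div_assoc, mul_sum]
  simp only [← mul_div_assoc (G.collisionKernel _), ← sum_div]
  congr 1
  calc ∑ i, G.msym x.1 x.2 * (min (F i x.1 ^ 2) (F i x.2 ^ 2) *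
          (G.pairCollision (f i) x.1 x.2 / G.msym x.1 x.2))
      = ∑ i, min (F i x.1 ^ 2) (F i x.2 ^ 2) * G.pairCollision (f i) x.1 x.2 := by
        refine sum_congr rfl fun i _ => ?_
        rw [mul_left_comm, msym_mul_pairCollision_div_msym (hf i)]
    _ = _ := by
        simp only [pairCollision, selfTensor, mul_sum]
        rw [sum_comm]
        refine sum_congr rfl fun β _ => sum_comm.trans ?_
        refine sum_congr rfl fun β' _ => sum_congr rfl fun i _ => ?_
        ring

theorem sum_pairCollision_le (hf : ∀ i, IsSubassignment (f i)) (hF : ∀ v, ∑ i, F i v ^ 2 ≤ K)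
    (v v' : G.Q2) :
    ∑ i, G.pairCollision (fun p => F i p.1 * f i p) v v' ≤
      K * (G.msym v v' * phi (roundedCollision F f v v')) :=
  calc ∑ i, G.pairCollision (fun p => F i p.1 * f i p) v v'
      = G.msym v v' * ∑ i, F i v * F i v' * (G.pairCollision (f i) v v' / G.msym v v') := by
        rw [mul_sum]
        refine sum_congr rfl fun i _ => ?_
        rw [pairCollision_mul, mul_left_comm, msym_mul_pairCollision_div_msym (hf i)]
    _ ≤ G.msym v v' * (K * phi (roundedCollision F f v v')) := by
        refine mul_le_mul_of_nonneg_left (sum_mul_mul_le_mul_phi (fun i => ?_) (fun i => ?_)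
          (hF v) (hF v')) (G.msym_nonneg v v')
        · exact div_nonneg (pairCollision_nonneg (hf i).nonneg v v') (G.msym_nonneg v v')
        · exact div_le_one_of_le₀ (pairCollision_le_msym (hf i) v v') (G.msym_nonneg v v')
    _ = K * (G.msym v v' * phi (roundedCollision F f v v')) := by ring

theorem sum_normUsq_op_le_mul_phi (hf : ∀ i, IsSubassignment (f i))
    (hF : ∀ v, ∑ i, F i v ^ 2 ≤ K) :
    ∑ i, G.normUsq (G.op fun p => F i p.1 * f i p) ≤ K * phi (G.collVal ^ 2) := by
  obtain ⟨v₀⟩ := G.neQ2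
  have hK : 0 ≤ K := (sum_nonneg fun i _ => sq_nonneg (F i v₀)).trans (hF v₀)
  have hround (x : G.Q2 × G.Q2) := roundedCollision_mem_Icc (F := F) hf x.1 x.2
  calc ∑ i, G.normUsq (G.op fun p => F i p.1 * f i p)
      = ∑ x : G.Q2 × G.Q2, ∑ i, G.pairCollision (fun p => F i p.1 * f i p) x.1 x.2 := by
        simp only [normUsq_op_eq_sum_pairCollision]
        exact sum_comm
    _ ≤ ∑ x : G.Q2 × G.Q2, K * (G.msym x.1 x.2 * phi (roundedCollision F f x.1 x.2)) :=
        sum_le_sum fun x _ => sum_pairCollision_le hf hF x.1 x.2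
    _ = K * ∑ x : G.Q2 × G.Q2, G.msym x.1 x.2 * phi (roundedCollision F f x.1 x.2) :=
        (mul_sum ..).symm
    _ ≤ K * phi (∑ x : G.Q2 × G.Q2, G.msym x.1 x.2 * roundedCollision F f x.1 x.2) :=
        mul_le_mul_of_nonneg_left (concaveOn_phi.le_map_sum (fun x _ => G.msym_nonneg x.1 x.2)
          G.sum_msym fun x _ => hround x) hK
    _ ≤ K * phi (G.collVal ^ 2) := by
        have hle := sum_msym_mul_roundedCollision_le (F := F) hf
        refine mul_le_mul_of_nonneg_left (monotoneOn_phi ⟨?_, hle.trans G.collVal_sq_le_one⟩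
          ⟨sq_nonneg _, G.collVal_sq_le_one⟩ hle) hK
        exact sum_nonneg fun x _ => mul_nonneg (G.msym_nonneg x.1 x.2) (hround x).1

end VectorAssignments

section Tensor

variable {G H : ProjGame}

theorem tensorC_eq_some_iff {A A' : Type} {π : A → Option A} {π' : A' → Option A'} {b a : A × A'} :
    tensorC π π' b = some a ↔ π b.1 = some a.1 ∧ π' b.2 = some a.2 := by
  cases hπ : π b.1 <;> cases hπ' : π' b.2 <;> simp [tensorC, hπ, hπ', Prod.ext_iff]

theorem tensor_μ_eq_sum (u : G.Q1) (u' : H.Q1) (v : G.Q2) (v' : H.Q2)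
    (ρ : G.A × H.A → Option (G.A × H.A)) :
    (G.tensor H).μ ((u, u'), (v, v'), ρ) =
      ∑ π, ∑ π', if tensorC π π' = ρ then G.μ (u, v, π) * H.μ (u', v', π') else 0 := by
  rw [← Fintype.sum_prod_type']
  refine (Fintype.sum_of_injective (fun x => ((u, v, x.1), (u', v', x.2))) ?_ _ _ ?_ ?_).symm
  · rintro ⟨π, π'⟩ ⟨σ, σ'⟩ h
    simpa using h
  · rintro ⟨⟨u₁, v₁, π⟩, u₂, v₂, π'⟩ hx
    refine if_neg fun h => hx ⟨(π, π'), ?_⟩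
    obtain ⟨hu, hvρ⟩ := Prod.mk.inj h
    obtain ⟨rfl, rfl⟩ := Prod.mk.inj hu
    obtain ⟨rfl, rfl⟩ := Prod.mk.inj (Prod.mk.inj hvρ).1
    rfl
  · rintro ⟨π, π'⟩
    by_cases hρ : tensorC π π' = ρ
    · exact (if_pos hρ).trans (if_pos (hρ ▸ rfl)).symm
    · exact (if_neg hρ).trans (if_neg fun h => hρ (Prod.mk.inj (Prod.mk.inj h).2).2).symm

theorem sum_tensor_μ_mul (u : G.Q1) (u' : H.Q1) (v : G.Q2) (v' : H.Q2)
    (Φ : (G.A × H.A → Option (G.A × H.A)) → ℝ) :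
    ∑ ρ, (G.tensor H).μ ((u, u'), (v, v'), ρ) * Φ ρ =
      ∑ π, ∑ π', G.μ (u, v, π) * H.μ (u', v', π') * Φ (tensorC π π') := by
  calc ∑ ρ, (G.tensor H).μ ((u, u'), (v, v'), ρ) * Φ ρ
      = ∑ ρ : G.A × H.A → Option (G.A × H.A), ∑ π, ∑ π',
          if tensorC π π' = ρ then G.μ (u, v, π) * H.μ (u', v', π') * Φ ρ else 0 := by
        refine sum_congr rfl fun ρ _ => (congrArg (· * Φ ρ) (tensor_μ_eq_sum u u' v v' ρ)).trans ?_
        simp only [sum_mul, ite_mul, zero_mul]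
    _ = _ := by
        rw [sum_comm]
        refine sum_congr rfl fun π _ => sum_comm.trans ?_
        simp only [sum_ite_eq, mem_univ, if_true]

theorem wU_tensor (u : G.Q1) (u' : H.Q1) : (G.tensor H).wU (u, u') = G.wU u * H.wU u' := by
  have hμ (v : G.Q2) (v' : H.Q2) : ∑ ρ, (G.tensor H).μ ((u, u'), (v, v'), ρ) =
      (∑ π, G.μ (u, v, π)) * ∑ π', H.μ (u', v', π') := by
    simpa [sum_mul_sum] using sum_tensor_μ_mul u u' v v' fun _ => 1
  simp only [wU, sum_mul_sum, ← hμ]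
  exact Fintype.sum_prod_type _

theorem opMatrix_tensor (u : G.Q1) (u' : H.Q1) (α : G.A) (α' : H.A) (v : G.Q2) (v' : H.Q2)
    (β : G.A) (β' : H.A) :
    (G.tensor H).opMatrix ((u, u'), (α, α')) ((v, v'), (β, β')) =
      G.opMatrix (u, α) (v, β) * H.opMatrix (u', α') (v', β') := by
  have h := sum_tensor_μ_mul u u' v v' fun ρ => if ρ (β, β') = some (α, α') then 1 else 0
  simp only [tensorC_eq_some_iff, mul_ite, mul_one, mul_zero] at h
  simp only [opMatrix, wU_tensor, div_mul_div_comm, sum_filter, sum_mul_sum]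
  congr 1
  refine h.trans (sum_congr rfl fun π _ => sum_congr rfl fun π' _ => ?_)
  rw [← ite_zero_mul_ite_zero]

theorem sum_tensor_Q2_prod_A (F : (G.tensor H).Q2 × (G.tensor H).A → ℝ) :
    ∑ x, F x = ∑ p : G.Q2 × G.A, ∑ q : H.Q2 × H.A, F ((p.1, q.1), (p.2, q.2)) := by
  rw [← Fintype.sum_prod_type']
  exact (Equiv.sum_comp (Equiv.prodProdProdComm ..) F).symm

theorem op_tensor (f : (G.tensor H).Q2 × (G.tensor H).A → ℝ) (u : G.Q1) (u' : H.Q1) (α : G.A)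
    (α' : H.A) :
    (G.tensor H).op f ((u, u'), (α, α')) =
      G.op (fun p => H.op (fun q => f ((p.1, q.1), (p.2, q.2))) (u', α')) (u, α) := by
  simp only [op_eq_mulVec, Matrix.mulVec, dotProduct, mul_sum]
  refine (sum_tensor_Q2_prod_A _).trans (sum_congr rfl fun p _ => sum_congr rfl fun q _ => ?_)
  rw [opMatrix_tensor, mul_assoc]

theorem normUsq_op_tensor (f : (G.tensor H).Q2 × (G.tensor H).A → ℝ) :
    (G.tensor H).normUsq ((G.tensor H).op f) = ∑ i : H.Q1 × H.A, H.wU i.1 *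
      G.normUsq (G.op fun p => H.op (fun q => f ((p.1, q.1), (p.2, q.2))) i) := by
  simp only [normUsq_eq_sum_prod, mul_sum]
  rw [sum_comm, ← Fintype.sum_prod_type']
  refine (Equiv.sum_comp (Equiv.prodProdProdComm ..) _).symm.trans (sum_congr rfl fun x _ => ?_)
  obtain ⟨⟨u, α⟩, u', α'⟩ := x
  refine (congrArg₂ (fun w y => w * y ^ 2) (wU_tensor u u') (op_tensor f u u' α α')).trans ?_
  ring

end Tensor

section Product

variable {G H : ProjGame}

theorem normUsq_op_const_mul (c : ℝ) (f : G.Q2 × G.A → ℝ) :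
    G.normUsq (G.op fun p => c * f p) = c ^ 2 * G.normUsq (G.op f) := by
  have : G.op (fun p => c * f p) = c • G.op f := by
    simp only [op_eq_mulVec, ← Matrix.mulVec_smul]
    rfl
  simp only [this, normUsq_eq_sum_prod, mul_sum, Pi.smul_apply, smul_eq_mul, mul_pow,
    mul_left_comm (c ^ 2)]

theorem op_sum {J : Type*} [Fintype J] (f : J → G.Q2 × G.A → ℝ) (i : G.Q1 × G.A) :
    G.op (fun p => ∑ j, f j p) i = ∑ j, G.op (f j) i := by
  simp only [op_eq_mulVec, Matrix.mulVec, dotProduct, mul_sum]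
  exact sum_comm

theorem IsBob.marginal {f : (G.tensor H).Q2 × (G.tensor H).A → ℝ} (hf : (G.tensor H).IsBob f)
    (v : G.Q2) : H.IsBob fun q => ∑ β, f ((v, q.1), (β, q.2)) := by
  refine ⟨fun q => sum_nonneg fun β _ => hf.1 _, fun v' => ?_⟩
  rw [sum_comm, ← Fintype.sum_prod_type']
  exact hf.2 (v, v')

theorem IsBob.normUsq_op_tensor_le {f : (G.tensor H).Q2 × (G.tensor H).A → ℝ}
    (hf : (G.tensor H).IsBob f) :
    (G.tensor H).normUsq ((G.tensor H).op f) ≤ H.collVal ^ 2 * phi (G.collVal ^ 2) := by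
  set g : H.Q1 × H.A → G.Q2 × G.A → ℝ := fun i p => H.op (fun q => f ((p.1, q.1), (p.2, q.2))) i
  have hg (i p) : 0 ≤ g i p := H.op_nonneg (fun q => hf.1 _) i
  choose h hh hgh using fun i => exists_isSubassignment_eq_sum_mul (hg i)
  set F : H.Q1 × H.A → G.Q2 → ℝ := fun i v => √(H.wU i.1) * ∑ β, g i (v, β)
  have hF (v : G.Q2) : ∑ i, F i v ^ 2 ≤ H.collVal ^ 2 :=
    calc ∑ i, F i v ^ 2 = H.normUsq (H.op fun q => ∑ β, f ((v, q.1), (β, q.2))) := by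
          simp only [F, g, mul_pow, Real.sq_sqrt (H.wU_nonneg _), normUsq_eq_sum_prod, op_sum]
      _ ≤ H.collVal ^ 2 := (hf.marginal v).normUsq_op_le
  calc (G.tensor H).normUsq ((G.tensor H).op f)
      = ∑ i, G.normUsq (G.op fun p => F i p.1 * h i p) := by
        rw [normUsq_op_tensor]
        refine sum_congr rfl fun i _ => ?_
        simp only [F, mul_assoc, ← hgh, normUsq_op_const_mul, Real.sq_sqrt (H.wU_nonneg _), g]
    _ ≤ H.collVal ^ 2 * phi (G.collVal ^ 2) := sum_normUsq_op_le_mul_phi hh hF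

end Product

end ProjGame

/-- **Main theorem.** Any two projection games `G` and `H` satisfy
`‖G ⊗ H‖² ≤ φ(‖G‖²)·‖H‖²` where `φ(x) = 2√x/(1+x)` and `‖·‖` is the collision value. -/
theorem collision_value_product (G H : ProjGame) :
    (G.tensor H).collVal ^ 2
      ≤ (2 * Real.sqrt (G.collVal ^ 2) / (1 + G.collVal ^ 2)) * H.collVal ^ 2 := by
  rw [mul_comm]
  exact ProjGame.collVal_sq_le (mul_nonneg (sq_nonneg _) (phi_nonneg (sq_nonneg _)))
    fun f hf => hf.normUsq_op_tensor_le
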